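/- arXiv:1906.02949 — 3 statements merged into one kernel-verified Lean document; each statement's English description precedes it below -/
import Mathlib

section
/- Let p be an odd prime, let m > 1 and d > 1, and let G = G(p^m, p^m, p^d). Suppose A is a subgroup of Aut(G) of order p^(2m+d−2)·(p²−1) which contains a normal Sylow p-subgroup, and let g ∈ G be an element of order p^m. Then G ≠ {φ(g) : φ ∈ A} ∪ Φ(G), where Φ(G) is the Frattini subgroup of G. -/
/-- The carrier of the group `G(p^m, p^n, p^d)`: the set
`ZMod (p^m) × ZMod (p^n) × ZMod (p^d)`. -/
def GCar (p m n d : ℕ) : Type :=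
  ZMod (p ^ m) × ZMod (p ^ n) × ZMod (p ^ d)

/-- The multiplication of the group `G(p^m, p^n, p^d)`:
`(x1,x2,x3)·(y1,y2,y3) = (x1+y1, x2+y2, x3+y3 − x̄2·ȳ1)`,
where the bars denote reduction modulo `p^d`. -/
def Gmul (p m n d : ℕ) (x y : GCar p m n d) : GCar p m n d :=
  (x.1 + y.1, x.2.1 + y.2.1,
    x.2.2 + y.2.2 - (ZMod.cast x.2.1 : ZMod (p ^ d)) * (ZMod.cast y.1 : ZMod (p ^ d)))

set_option linter.unnecessarySeqFocus false in
/-- The group `G(p^m, p^n, p^d)` (for `d ≤ n ≤ m`). The elements `a = (1,0,0)`,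
`b = (0,1,0)`, `c = (0,0,1)` satisfy the defining relations
`a^(p^m) = b^(p^n) = c^(p^d) = 1`, `b⁻¹ab = ac`, `a⁻¹ca = b⁻¹cb = c`,
and every element of the group is uniquely of the form `a^(x1) b^(x2) c^(x3)`. -/
def Ggroup (p m n d : ℕ) (hdn : d ≤ n) (hdm : d ≤ m) : Group (GCar p m n d) where
  mul := Gmul p m n d
  one := ((0, 0, 0) : ZMod (p ^ m) × ZMod (p ^ n) × ZMod (p ^ d))
  inv x := ((-x.1, -x.2.1,
    -x.2.2 - (ZMod.cast x.2.1 : ZMod (p ^ d)) * (ZMod.cast x.1 : ZMod (p ^ d))) :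
      ZMod (p ^ m) × ZMod (p ^ n) × ZMod (p ^ d))
  mul_assoc x y z := by
    have h1 : (p : ℕ) ^ d ∣ p ^ n := pow_dvd_pow p hdn
    have h2 : (p : ℕ) ^ d ∣ p ^ m := pow_dvd_pow p hdm
    show Gmul p m n d (Gmul p m n d x y) z = Gmul p m n d x (Gmul p m n d y z)
    refine Prod.ext ?_ (Prod.ext ?_ ?_) <;>
      simp [Gmul, ZMod.cast_add h1, ZMod.cast_add h2] <;> ring
  one_mul x := by
    show Gmul p m n d ((0, 0, 0) : ZMod (p ^ m) × ZMod (p ^ n) × ZMod (p ^ d)) x = x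
    refine Prod.ext ?_ (Prod.ext ?_ ?_) <;> simp [Gmul, ZMod.cast_zero]
  mul_one x := by
    show Gmul p m n d x ((0, 0, 0) : ZMod (p ^ m) × ZMod (p ^ n) × ZMod (p ^ d)) = x
    refine Prod.ext ?_ (Prod.ext ?_ ?_) <;> simp [Gmul, ZMod.cast_zero]
  inv_mul_cancel x := by
    have h1 : (p : ℕ) ^ d ∣ p ^ n := pow_dvd_pow p hdn
    have h2 : (p : ℕ) ^ d ∣ p ^ m := pow_dvd_pow p hdm
    show Gmul p m n d _ x = ((0, 0, 0) : ZMod (p ^ m) × ZMod (p ^ n) × ZMod (p ^ d))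
    refine Prod.ext ?_ (Prod.ext ?_ ?_) <;>
      simp [Gmul, ZMod.cast_neg h1, ZMod.cast_neg h2] <;> ring

/-- In an abelian group whose exponent divides `p ^ m`, with `p` odd, an involutive endomorphism
that is inversion modulo `p`-th powers is inversion. -/
theorem MonoidHom.eq_inv_of_involutive_of_mul_eq_pow {W : Type*} [CommGroup W] {p m : ℕ}
    (hodd : Odd p) (hexp : ∀ w : W, w ^ p ^ m = 1) (t : W →* W) (htt : ∀ w, t (t w) = w)
    (ht : ∀ w, ∃ v, w * t w = v ^ p) (w : W) : t w = w⁻¹ := by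
  have key : ∀ n w, ∃ v, w * t w = v ^ p ^ n := by
    intro n
    induction n with
    | zero => exact fun w => ⟨w * t w, by simp⟩
    | succ n ih =>
      intro w
      obtain ⟨v, hv⟩ := ih w
      obtain ⟨u, hu⟩ := ht v
      have hsq : (w * t w) ^ 2 = u ^ p ^ (n + 1) := by
        have h1 : (w * t w) ^ 2 = (w * t w) * t (w * t w) := by
          rw [map_mul, htt, mul_comm (t w) w, sq]
        rw [h1, hv, map_pow, ← mul_pow, hu, ← pow_mul, pow_succ']
      obtain ⟨s, hs⟩ := (hodd.pow : Odd (p ^ m))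
      refine ⟨u ^ (s + 1), ?_⟩
      calc w * t w = (w * t w) ^ (p ^ m) * (w * t w) := by rw [hexp, one_mul]
        _ = ((w * t w) ^ 2) ^ (s + 1) := by
          rw [← pow_succ, ← pow_mul, hs]
          ring_nf
        _ = (u ^ (s + 1)) ^ p ^ (n + 1) := by rw [hsq, pow_right_comm]
  obtain ⟨v, hv⟩ := key m w
  rw [hexp] at hv
  exact eq_inv_of_mul_eq_one_right hv

/-- If `π : G →* W` has kernel the commutator subgroup, every automorphism of `G` descends along
`π`. -/
theorem MonoidHom.map_mulAut_eq_of_ker_eq_commutator {G W : Type*} [Group G] [CommGroup W]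
    {π : G →* W} (hker : π.ker = commutator G) (φ : MulAut G) {x y : G} (h : π x = π y) :
    π (φ x) = π (φ y) := by
  have h1 : x⁻¹ * y ∈ commutator G := by
    rw [← hker, MonoidHom.mem_ker, map_mul, map_inv, h, inv_mul_cancel]
  have h2 : φ (x⁻¹ * y) ∈ commutator G := by
    have := (Subgroup.characteristic_iff_map_eq.mp
      (inferInstance : (commutator G).Characteristic)) φ
    rw [← this]
    exact Subgroup.mem_map_of_mem _ h1
  rw [← hker, MonoidHom.mem_ker, map_mul, map_mul, map_inv, map_inv, inv_mul_eq_one] at h2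
  exact h2

/-- A group of class two with chain-ordered commutator subgroup and odd exponent admits no group
of automorphisms containing an involution and acting regularly off a suitable subgroup `S`
containing the commutator subgroup. -/
theorem false_of_regular_off_subgroup {G W : Type*} [Group G] [CommGroup W] {p m : ℕ}
    (hodd : Odd p) (π : G →* W) (hπ : Function.Surjective π) (hker : π.ker = commutator G)
    (hcenter : π.ker ≤ Subgroup.center G) (hexp : ∀ w : W, w ^ p ^ m = 1)
    (hexp_ker : ∀ z ∈ π.ker, z ^ p ^ m = 1)
    (hchain : ∀ y ∈ π.ker, ∀ z ∈ π.ker, y ∈ Subgroup.zpowers z ∨ z ∈ Subgroup.zpowers y)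
    (S : Subgroup G) (hkerS : π.ker ≤ S) (hS : ∀ x ∈ S, ∃ w, π x = w ^ p)
    (a b : G) (ha2 : a ^ 2 ∉ S) (hba : ∀ n : ℤ, b * a ^ n ∉ S) (hab : ∀ n : ℤ, a * b ^ n ∉ S)
    (hne : a * b ≠ b * a) (A : Subgroup (MulAut G))
    (htrans : ∀ x ∉ S, ∀ y ∉ S, ∃ φ ∈ A, φ x = y)
    (hfree : ∀ φ ∈ A, ∀ x ∉ S, φ x = x → φ = 1)
    (t : MulAut G) (htA : t ∈ A) (ht1 : t ≠ 1) (htt : ∀ x, t (t x) = x) : False := by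
  have desc := fun (φ : MulAut G) {x y : G} (h : π x = π y) =>
    π.map_mulAut_eq_of_ker_eq_commutator hker φ h
  have hcomm : ∀ z ∈ π.ker, ∀ x, z * x = x * z := fun z hz x =>
    (Subgroup.mem_center_iff.mp (hcenter hz) x).symm
  have hexists : ∀ x y, π x = π y → ∃ z ∈ π.ker, y = x * z := fun x y h =>
    ⟨x⁻¹ * y, by rw [MonoidHom.mem_ker, map_mul, map_inv, h, inv_mul_cancel], by group⟩
  have hmemS : ∀ x y, π x = π y → x ∈ S → y ∈ S := by
    intro x y h hx
    obtain ⟨z, hz, rfl⟩ := hexists x y h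
    exact S.mul_mem hx (hkerS hz)
  -- `t` is inversion modulo `S`
  have hmulS : ∀ x, x * t x ∈ S := by
    intro x
    by_contra hu
    set u := x * t x with hu_def
    have htu : t u = t x * x := by rw [hu_def, map_mul, htt]
    obtain ⟨z, hz, huz⟩ := hexists u (t u) (by rw [htu, hu_def, map_mul, map_mul, mul_comm])
    have htz : t z = z⁻¹ := by
      have h := htt u
      rw [huz, map_mul, huz, mul_assoc, mul_eq_left] at h
      exact eq_inv_of_mul_eq_one_right h
    obtain ⟨s, hs⟩ := (hodd.pow : Odd (p ^ m))
    have hzs : z ^ (s + 1) * z ^ (s + 1) = z := by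
      rw [← pow_add, show s + 1 + (s + 1) = p ^ m + 1 by omega, pow_succ, hexp_ker z hz, one_mul]
    refine ht1 (hfree t htA (u * z ^ (s + 1)) (fun h => hu (hmemS _ _ ?_ h)) ?_)
    · rw [map_mul, MonoidHom.mem_ker.mp (pow_mem hz _), mul_one]
    · rw [map_mul, map_pow, htz, huz, mul_assoc, inv_pow]
      congr 1
      rw [mul_inv_eq_iff_eq_mul, hzs]
  -- `t` induces inversion on `W`
  have hinv : ∀ x, π (t x) = (π x)⁻¹ := by
    have hsec := Function.surjInv_eq hπ
    let T : W →* W :=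
      { toFun := fun w => π (t (Function.surjInv hπ w))
        map_one' := by
          rw [desc t (y := 1) (by rw [hsec, map_one]), map_one, map_one]
        map_mul' := fun v w => by
          rw [desc t (y := Function.surjInv hπ v * Function.surjInv hπ w)
            (by rw [hsec, map_mul, hsec, hsec]), map_mul, map_mul] }
    have hT : ∀ x, T (π x) = π (t x) := fun x => desc t (hsec _)
    intro x
    rw [← hT]
    refine T.eq_inv_of_involutive_of_mul_eq_pow hodd hexp ?_ ?_ _
    · intro w
      obtain ⟨x, rfl⟩ := hπ w
      rw [hT, hT, htt]
    · intro w
      obtain ⟨x, rfl⟩ := hπ w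
      rw [hT, ← map_mul]
      exact hS _ (hmulS x)
  -- an element of `A` that is trivial on `W` is trivial
  have hfaithful : ∀ k ∈ A, (∀ x, π (k x) = π x) → k = 1 := by
    intro k hk h
    obtain ⟨y, hy, hka⟩ := hexists a (k a) (h a).symm
    obtain ⟨z, hz, hkb⟩ := hexists b (k b) (h b).symm
    have aux : ∀ x₁ x₂ y₁ y₂ : G, y₁ ∈ π.ker → y₂ ∈ π.ker → k x₁ = x₁ * y₁ → k x₂ = x₂ * y₂ →
        ∀ n : ℤ, y₁ ^ n = y₂ → k (x₂ * x₁ ^ (-n)) = x₂ * x₁ ^ (-n) := by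
      intro x₁ x₂ y₁ y₂ h₁ h₂ e₁ e₂ n hn
      rw [map_mul, map_zpow, e₁, e₂, (show Commute x₁ y₁ from (hcomm _ h₁ _).symm).mul_zpow,
        mul_assoc, ← mul_assoc y₂, hcomm _ h₂, zpow_neg y₁, hn, mul_assoc, mul_inv_cancel, mul_one]
    rcases hchain y hy z hz with hyz | hzy
    · obtain ⟨n, hn⟩ := Subgroup.mem_zpowers_iff.mp hyz
      exact hfree k hk _ (hab (-n)) (aux b a z y hz hy hkb hka n hn)
    · obtain ⟨n, hn⟩ := Subgroup.mem_zpowers_iff.mp hzy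
      exact hfree k hk _ (hba (-n)) (aux a b y z hy hz hka hkb n hn)
  have hcentral : ∀ φ ∈ A, ∀ x, t (φ x) = φ (t x) := by
    intro φ hφ x
    have hk := hfaithful (φ⁻¹ * t⁻¹ * φ * t) (A.mul_mem (A.mul_mem (A.mul_mem (A.inv_mem hφ)
      (A.inv_mem htA)) hφ) htA) ?_
    · have h : t * φ = φ * t := by
        have : φ⁻¹ * t⁻¹ * φ * t = (t * φ)⁻¹ * (φ * t) := by group
        rw [this, inv_mul_eq_one] at hk
        exact hk
      exact DFunLike.congr_fun h x
    · intro x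
      have ht' : t⁻¹ = t := inv_eq_of_mul_eq_one_right (MulEquiv.ext htt)
      rw [ht']
      have h1 : π (t (φ (t x))) = π (φ x) := by
        rw [hinv, ← map_inv, ← map_inv]
        exact desc φ (by rw [map_inv, hinv, inv_inv])
      calc π ((φ⁻¹ * t * φ * t) x) = π (φ⁻¹ (t (φ (t x)))) := rfl
        _ = π (φ⁻¹ (φ x)) := desc _ h1
        _ = π x := by rw [MulAut.inv_apply_self]
  -- hence `t` inverts every element off `S`
  have hall : ∀ y ∉ S, t y = y⁻¹ := by
    intro y hy
    have ha : a⁻¹ * t a ∉ S := by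
      intro h
      refine ha2 (inv_mem_iff.mp (hmemS _ _ ?_ h))
      rw [map_mul, hinv, map_inv, map_inv, map_pow, sq, mul_inv]
    obtain ⟨φ, hφ, rfl⟩ := htrans _ ha y hy
    rw [hcentral φ hφ, ← map_inv]
    congr 1
    rw [map_mul, map_inv, htt, mul_inv_rev, inv_inv]
  have h1 := hall a (by simpa using hab 0)
  have h2 := hall b (by simpa using hba 0)
  have h3 := hall (a * b) (by simpa using hab 1)
  rw [map_mul, h1, h2, ← mul_inv_rev, inv_inj] at h3
  exact hne h3.symm

/-- If the orbit of `g` under a finite group `A` of automorphisms covers a set `T` with as many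
elements as `A`, then `A` acts regularly on `T`. -/
theorem regular_of_subset_orbit {G : Type*} [Group G] [Finite G] (A : Subgroup (MulAut G)) (g : G)
    (T : Set G) (hT : T ⊆ (fun φ : MulAut G => φ g) '' (A : Set (MulAut G)))
    (hcard : Nat.card A = T.ncard) :
    (∀ x ∈ T, ∀ y ∈ T, ∃ φ ∈ A, φ x = y) ∧ ∀ φ ∈ A, ∀ x ∈ T, φ x = x → φ = 1 := by
  have : Finite (MulAut G) := Finite.of_injective _ DFunLike.coe_injective
  have hA : (A : Set (MulAut G)).ncard = T.ncard := hcard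
  have hle : ((fun φ : MulAut G => φ g) '' (A : Set (MulAut G))).ncard ≤ T.ncard :=
    (Set.ncard_image_le).trans_eq hA
  have hinj : Set.InjOn (fun φ : MulAut G => φ g) (A : Set (MulAut G)) := by
    refine Set.injOn_of_ncard_image_eq ?_ (Set.toFinite _)
    rw [← Set.eq_of_subset_of_ncard_le hT hle, hA]
  refine ⟨fun x hx y hy => ?_, fun φ hφ x hx h => ?_⟩
  · obtain ⟨φ, hφ, rfl⟩ := hT hx
    obtain ⟨ψ, hψ, rfl⟩ := hT hy
    exact ⟨ψ * φ⁻¹, A.mul_mem hψ (A.inv_mem hφ), by simp⟩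
  · obtain ⟨ψ, hψ, rfl⟩ := hT hx
    exact mul_eq_right.mp (hinj (A.mul_mem hφ hψ) hψ h)

/-- In `ZMod (p ^ d)` divisibility is a total relation. -/
theorem ZMod.dvd_total_of_prime_pow {p : ℕ} (hp : p.Prime) (d : ℕ) (y z : ZMod (p ^ d)) :
    y ∣ z ∨ z ∣ y := by
  have : NeZero (p ^ d) := ⟨pow_ne_zero _ hp.ne_zero⟩
  have key : ∀ x : ZMod (p ^ d), x ≠ 0 → ∃ i, Associated x ((p : ZMod (p ^ d)) ^ i) := by
    intro x hx
    have hx' : x.val ≠ 0 := by rwa [Ne, ZMod.val_eq_zero]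
    obtain ⟨i, u, hu, h⟩ := Nat.exists_eq_pow_mul_and_not_dvd hx' p hp.ne_one
    have hunit : IsUnit (u : ZMod (p ^ d)) :=
      (ZMod.isUnit_iff_coprime _ _).mpr ((hp.coprime_iff_not_dvd.mpr hu).symm.pow_right d)
    refine ⟨i, Associated.symm ⟨hunit.unit, ?_⟩⟩
    rw [IsUnit.unit_spec, ← ZMod.natCast_zmod_val x, h]
    push_cast
    rfl
  by_cases hy : y = 0
  · exact Or.inr (hy ▸ dvd_zero z)
  by_cases hz : z = 0
  · exact Or.inl (hz ▸ dvd_zero y)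
  obtain ⟨i, hi⟩ := key y hy
  obtain ⟨j, hj⟩ := key z hz
  rw [hi.dvd_iff_dvd_left, hj.dvd_iff_dvd_right, hj.dvd_iff_dvd_left, hi.dvd_iff_dvd_right]
  exact (le_total i j).imp (pow_dvd_pow _) (pow_dvd_pow _)

/-- The kernel of a homomorphism onto a group of prime order contains the Frattini subgroup. -/
theorem frattini_le_ker_of_prime_card {G H : Type*} [Group G] [CommGroup H] {p : ℕ}
    [Fact p.Prime] (hH : Nat.card H = p) {f : G →* H} (hf : Function.Surjective f) :
    frattini G ≤ f.ker := by
  have := isSimpleGroup_of_prime_card hH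
  refine frattini_le_coatom ?_
  rw [← MonoidHom.comap_bot]
  exact Subgroup.isCoatom_comap_of_surjective hf isCoatom_bot

namespace GCar

variable {p m d : ℕ}

instance [h : Fact (d ≤ m)] : Group (GCar p m m d) := Ggroup p m m d h.out h.out

/-- The element of `G(p^m, p^m, p^d)` with the given coordinates. -/
def mk (u v : ZMod (p ^ m)) (w : ZMod (p ^ d)) : GCar p m m d := (u, v, w)

instance [NeZero p] : Finite (GCar p m m d) :=
  inferInstanceAs (Finite (ZMod (p ^ m) × ZMod (p ^ m) × ZMod (p ^ d)))

theorem card_eq : Nat.card (GCar p m m d) = p ^ (2 * m + d) := by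
  have h : Nat.card (GCar p m m d) = Nat.card (ZMod (p ^ m) × ZMod (p ^ m) × ZMod (p ^ d)) := rfl
  rw [h, Nat.card_prod, Nat.card_prod, Nat.card_zmod, Nat.card_zmod]
  ring

variable [Fact (d ≤ m)]

theorem mk_mul_mk (u v u' v' : ZMod (p ^ m)) (w w' : ZMod (p ^ d)) :
    (mk u v w * mk u' v' w' : GCar p m m d) =
      mk (u + u') (v + v') (w + w' - (ZMod.cast v : ZMod (p ^ d)) * (ZMod.cast u' : ZMod (p ^ d))) :=
  rfl

/-- The projection of `G(p^m, p^m, p^d)` onto its first two coordinates. -/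
def toAbelian (p m d : ℕ) [Fact (d ≤ m)] :
    GCar p m m d →* Multiplicative (ZMod (p ^ m) × ZMod (p ^ m)) where
  toFun x := .ofAdd (x.1, x.2.1)
  map_one' := rfl
  map_mul' _ _ := rfl

theorem toAbelian_surjective : Function.Surjective (toAbelian p m d) :=
  fun w => ⟨mk w.toAdd.1 w.toAdd.2 0, rfl⟩

/-- The third coordinate subgroup of `G(p^m, p^m, p^d)`. -/
def ofThird (p m d : ℕ) [Fact (d ≤ m)] : Multiplicative (ZMod (p ^ d)) →* GCar p m m d where
  toFun w := mk 0 0 w.toAdd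
  map_one' := rfl
  map_mul' w w' := by simp [mk_mul_mk]

theorem range_ofThird : (ofThird p m d).range = (toAbelian p m d).ker := by
  ext x
  rw [MonoidHom.mem_ker]
  constructor
  · rintro ⟨w, rfl⟩
    rfl
  · intro h
    refine ⟨.ofAdd x.2.2, ?_⟩
    have h' : (x.1, x.2.1) = (0, 0) := h
    exact Prod.ext (Prod.ext_iff.mp h').1.symm (Prod.ext (Prod.ext_iff.mp h').2.symm rfl)

theorem ker_toAbelian_le_center : (toAbelian p m d).ker ≤ Subgroup.center (GCar p m m d) := by
  rw [← range_ofThird]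
  rintro _ ⟨w, rfl⟩
  rw [Subgroup.mem_center_iff]
  rintro ⟨x, y, z⟩
  change mk x y z * mk 0 0 w.toAdd = mk 0 0 w.toAdd * mk x y z
  simp [mk_mul_mk, add_comm]

open scoped commutatorElement in
theorem ker_toAbelian : (toAbelian p m d).ker = commutator (GCar p m m d) := by
  have hdm : d ≤ m := Fact.out
  refine le_antisymm ?_ (Abelianization.commutator_subset_ker _)
  rw [← range_ofThird]
  rintro _ ⟨w, rfl⟩
  obtain ⟨v, hv⟩ := ZMod.castHom_surjective (pow_dvd_pow p hdm) w.toAdd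
  have h : ofThird p m d w = ⁅(mk v 0 0 : GCar p m m d), (mk 0 1 0 : GCar p m m d)⁆ := by
    rw [eq_comm, commutatorElement_def, mul_inv_eq_iff_eq_mul, mul_inv_eq_iff_eq_mul]
    change mk v 0 0 * mk 0 1 0 = mk 0 0 w.toAdd * mk 0 1 0 * mk v 0 0
    rw [← hv, mk_mul_mk, mk_mul_mk, mk_mul_mk]
    simp [ZMod.cast_one (pow_dvd_pow p hdm)]
  rw [h]
  exact Subgroup.commutator_mem_commutator (Subgroup.mem_top _) (Subgroup.mem_top _)

theorem mem_zpowers_total (hp : p.Prime) {y z : GCar p m m d} (hy : y ∈ (toAbelian p m d).ker)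
    (hz : z ∈ (toAbelian p m d).ker) :
    y ∈ Subgroup.zpowers z ∨ z ∈ Subgroup.zpowers y := by
  rw [← range_ofThird] at hy hz
  obtain ⟨v, rfl⟩ := hy
  obtain ⟨w, rfl⟩ := hz
  have key : ∀ v w : Multiplicative (ZMod (p ^ d)), v.toAdd ∣ w.toAdd →
      ofThird p m d w ∈ Subgroup.zpowers (ofThird p m d v) := by
    rintro v w ⟨c, hc⟩
    obtain ⟨n, rfl⟩ := ZMod.intCast_surjective c
    refine Subgroup.mem_zpowers_iff.mpr ⟨n, ?_⟩
    rw [← map_zpow]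
    congr 1
    apply Multiplicative.toAdd.injective
    rw [hc, toAdd_zpow, zsmul_eq_mul, mul_comm]
  exact (ZMod.dvd_total_of_prime_pow hp d v.toAdd w.toAdd).symm.imp (key _ _) (key _ _)

theorem pow_eq_one_of_mem_ker {z : GCar p m m d} (hz : z ∈ (toAbelian p m d).ker) :
    z ^ p ^ m = 1 := by
  have hdm : d ≤ m := Fact.out
  rw [← range_ofThird] at hz
  obtain ⟨w, rfl⟩ := hz
  rw [← map_pow]
  convert map_one (ofThird p m d)
  apply Multiplicative.toAdd.injective
  rw [toAdd_pow, nsmul_eq_mul, (ZMod.natCast_eq_zero_iff _ _).mpr (pow_dvd_pow p hdm), zero_mul,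
    toAdd_one]

/-- The reduction of the first two coordinates modulo `p`. -/
def reduction (p m d : ℕ) [Fact (d ≤ m)] (hm : m ≠ 0) :
    GCar p m m d →* Multiplicative (ZMod p × ZMod p) :=
  (AddMonoidHom.toMultiplicative
    ((ZMod.castHom (dvd_pow_self p hm) (ZMod p)).toAddMonoidHom.prodMap
      (ZMod.castHom (dvd_pow_self p hm) (ZMod p)).toAddMonoidHom)).comp (toAbelian p m d)

theorem reduction_apply (hm : m ≠ 0) (x : GCar p m m d) :
    reduction p m d hm x = .ofAdd (ZMod.castHom (dvd_pow_self p hm) (ZMod p) x.1,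
      ZMod.castHom (dvd_pow_self p hm) (ZMod p) x.2.1) := rfl

theorem reduction_surjective (hm : m ≠ 0) : Function.Surjective (reduction p m d hm) := by
  intro w
  obtain ⟨u, hu⟩ := ZMod.castHom_surjective (dvd_pow_self p hm) w.toAdd.1
  obtain ⟨v, hv⟩ := ZMod.castHom_surjective (dvd_pow_self p hm) w.toAdd.2
  refine ⟨mk u v 0, ?_⟩
  rw [reduction_apply]
  exact congrArg Multiplicative.ofAdd (Prod.ext hu hv)

theorem frattini_le_ker_reduction [Fact p.Prime] (hm : m ≠ 0) :
    frattini (GCar p m m d) ≤ (reduction p m d hm).ker := by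
  have hcard : Nat.card (Multiplicative (ZMod p)) = p := Nat.card_zmod p
  have hfst := frattini_le_ker_of_prime_card hcard
    (f := (AddMonoidHom.toMultiplicative (AddMonoidHom.fst (ZMod p) (ZMod p))).comp
      (reduction p m d hm))
    (Function.Surjective.comp (g := AddMonoidHom.toMultiplicative (AddMonoidHom.fst _ _))
      (fun w => ⟨.ofAdd (w.toAdd, 0), rfl⟩) (reduction_surjective hm))
  have hsnd := frattini_le_ker_of_prime_card hcard
    (f := (AddMonoidHom.toMultiplicative (AddMonoidHom.snd (ZMod p) (ZMod p))).comp
      (reduction p m d hm))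
    (Function.Surjective.comp (g := AddMonoidHom.toMultiplicative (AddMonoidHom.snd _ _))
      (fun w => ⟨.ofAdd (0, w.toAdd), rfl⟩) (reduction_surjective hm))
  exact fun x hx => Prod.ext (hfst hx) (hsnd hx)

theorem exists_toAbelian_eq_pow_of_mem_ker_reduction (hm : m ≠ 0) {x : GCar p m m d}
    (hx : x ∈ (reduction p m d hm).ker) : ∃ w, toAbelian p m d x = w ^ p := by
  rw [MonoidHom.mem_ker, reduction_apply] at hx
  have hx' := Prod.ext_iff.mp (Multiplicative.ofAdd.injective hx)
  have key : ∀ y : ZMod (p ^ m), ZMod.castHom (dvd_pow_self p hm) (ZMod p) y = 0 →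
      ∃ z : ZMod (p ^ m), y = p • z := by
    intro y hy
    obtain ⟨n, rfl⟩ := ZMod.intCast_surjective y
    rw [map_intCast, ZMod.intCast_zmod_eq_zero_iff_dvd] at hy
    obtain ⟨k, rfl⟩ := hy
    exact ⟨k, by simp⟩
  obtain ⟨u, hu⟩ := key _ hx'.1
  obtain ⟨v, hv⟩ := key _ hx'.2
  exact ⟨.ofAdd (u, v), congrArg Multiplicative.ofAdd (Prod.ext hu hv)⟩

theorem ncard_compl_ker_reduction [Fact p.Prime] (hm : m ≠ 0) :
    ((reduction p m d hm).ker : Set (GCar p m m d))ᶜ.ncard =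
      p ^ (2 * m + d - 2) * (p ^ 2 - 1) := by
  have hp : p.Prime := Fact.out
  have h1 := (reduction p m d hm).ker.card_mul_index
  have hindex : (reduction p m d hm).ker.index = p ^ 2 := by
    rw [Subgroup.index_ker, MonoidHom.range_eq_top.mpr (reduction_surjective hm), Subgroup.card_top,
      show Nat.card (Multiplicative (ZMod p × ZMod p)) = Nat.card (ZMod p × ZMod p) from rfl,
      Nat.card_prod, Nat.card_zmod, sq]
  have hpow : p ^ (2 * m + d) = p ^ (2 * m + d - 2) * p ^ 2 := by
    rw [← pow_add]
    congr 1
    omega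
  rw [hindex, card_eq, hpow] at h1
  have h2 : ((reduction p m d hm).ker : Set (GCar p m m d)).ncard = p ^ (2 * m + d - 2) :=
    Nat.eq_of_mul_eq_mul_right (pow_pos hp.pos 2) h1
  rw [Set.ncard_compl, h2, card_eq, hpow, Nat.mul_sub, mul_one]

theorem ker_toAbelian_le_ker_reduction (hm : m ≠ 0) :
    (toAbelian p m d).ker ≤ (reduction p m d hm).ker := by
  intro x hx
  rw [MonoidHom.mem_ker, reduction, MonoidHom.comp_apply, MonoidHom.mem_ker.mp hx, map_one]

theorem mk_one_zero_mul_ne (hp : p.Prime) (hd : d ≠ 0) :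
    (mk 1 0 0 * mk 0 1 0 : GCar p m m d) ≠ mk 0 1 0 * mk 1 0 0 := by
  have hdm : d ≤ m := Fact.out
  have : Fact (1 < p ^ d) := ⟨Nat.one_lt_pow hd hp.one_lt⟩
  intro h
  rw [mk_mul_mk, mk_mul_mk] at h
  have h3 := congrArg (fun x : GCar p m m d => x.2.2) h
  simp [mk, ZMod.cast_one (pow_dvd_pow p hdm)] at h3

end GCar

/-- Let `p` be an odd prime, `m > 1`, `d > 1`, `G = G(p^m, p^m, p^d)`. If `A` is a
subgroup of `Aut(G)` of order `p^(2m+d-2)·(p²-1)` containing a normal Sylow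
`p`-subgroup, and `g ∈ G` has order `p^m`, then `G ≠ g^A ∪ Φ(G)`. -/
theorem ne_orbit_union_frattini (p m d : ℕ) (hp : p.Prime) (hodd : Odd p)
    (hm : 1 < m) (hd : 1 < d) (hdm : d ≤ m) :
    letI : Group (GCar p m m d) := Ggroup p m m d hdm hdm
    ∀ (A : Subgroup (MulAut (GCar p m m d))) (g : GCar p m m d),
      Nat.card A = p ^ (2 * m + d - 2) * (p ^ 2 - 1) →
      (∃ P : Sylow p A, (P : Subgroup A).Normal) →
      orderOf g = p ^ m →
      (Set.univ : Set (GCar p m m d)) ≠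
        (fun φ : MulAut (GCar p m m d) => φ g) '' ↑A ∪ ↑(frattini (GCar p m m d)) := by
  intro A g hA _ _ hcover
  have : Fact p.Prime := ⟨hp⟩
  have : Fact (d ≤ m) := ⟨hdm⟩
  have hm0 : m ≠ 0 := by omega
  have : Finite A := Nat.finite_of_card_ne_zero <| by
    rw [hA]
    have := Nat.one_lt_pow two_ne_zero hp.one_lt
    exact mul_ne_zero (pow_ne_zero _ hp.ne_zero) (by omega)
  set S := (GCar.reduction p m d hm0).ker with hS
  have horbit : ((S : Set (GCar p m m d))ᶜ) ⊆
      (fun φ : MulAut (GCar p m m d) => φ g) '' (A : Set (MulAut (GCar p m m d))) := fun x hx =>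
    ((Set.ext_iff.mp hcover x).mp (Set.mem_univ x)).resolve_right
      fun h => hx (GCar.frattini_le_ker_reduction hm0 h)
  obtain ⟨htrans, hfree⟩ := regular_of_subset_orbit A g _ horbit
    (hA.trans (GCar.ncard_compl_ker_reduction hm0).symm)
  have htwo : 2 ∣ Nat.card A := by
    rw [hA]
    refine dvd_mul_of_dvd_right ?_ _
    exact (Nat.Odd.sub_odd hodd.pow odd_one).two_dvd
  obtain ⟨t, ht⟩ := exists_prime_orderOf_dvd_card' 2 htwo
  have ht2 : (t : MulAut (GCar p m m d)) * t = 1 := by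
    rw [← Subgroup.coe_mul, ← sq, ← ht, pow_orderOf_eq_one, Subgroup.coe_one]
  have ht1 : (t : MulAut (GCar p m m d)) ≠ 1 := by
    intro h
    rw [OneMemClass.coe_eq_one.mp h, orderOf_one] at ht
    exact absurd ht (by norm_num)
  refine false_of_regular_off_subgroup hodd (m := m) (GCar.toAbelian p m d)
    GCar.toAbelian_surjective GCar.ker_toAbelian GCar.ker_toAbelian_le_center ?_
    (fun z => GCar.pow_eq_one_of_mem_ker) (fun y hy z => GCar.mem_zpowers_total hp hy) S
    (GCar.ker_toAbelian_le_ker_reduction hm0)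
    (fun x => GCar.exists_toAbelian_eq_pow_of_mem_ker_reduction hm0)
    (GCar.mk 1 0 0) (GCar.mk 0 1 0) ?_ ?_ ?_ ?_ A htrans hfree t t.2 ht1
    (fun x => DFunLike.congr_fun ht2 x)
  · intro w
    apply Multiplicative.toAdd.injective
    rw [toAdd_pow, toAdd_one]
    have h (x : ZMod (p ^ m)) : p ^ m • x = 0 := by
      rw [nsmul_eq_mul, ZMod.natCast_self, zero_mul]
    exact Prod.ext (h _) (h _)
  · intro h
    rw [hS, MonoidHom.mem_ker, map_pow, GCar.reduction_apply] at h
    have h' : (2 : ℕ) • (ZMod.castHom (dvd_pow_self p hm0) (ZMod p) 1) = 0 :=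
      congrArg (fun w => w.toAdd.1) h
    rw [map_one, nsmul_eq_mul, mul_one, ZMod.natCast_eq_zero_iff,
      Nat.prime_dvd_prime_iff_eq hp Nat.prime_two] at h'
    exact absurd hodd (by rw [h']; decide)
  · intro n h
    rw [hS, MonoidHom.mem_ker, map_mul, map_zpow, GCar.reduction_apply, GCar.reduction_apply] at h
    have h' : ZMod.castHom (dvd_pow_self p hm0) (ZMod p) 1 +
        n • ZMod.castHom (dvd_pow_self p hm0) (ZMod p) 0 = 0 := congrArg (fun w => w.toAdd.2) h
    rw [map_one, map_zero, smul_zero, add_zero] at h'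
    exact one_ne_zero h'
  · intro n h
    rw [hS, MonoidHom.mem_ker, map_mul, map_zpow, GCar.reduction_apply, GCar.reduction_apply] at h
    have h' : ZMod.castHom (dvd_pow_self p hm0) (ZMod p) 1 +
        n • ZMod.castHom (dvd_pow_self p hm0) (ZMod p) 0 = 0 := congrArg (fun w => w.toAdd.1) h
    rw [map_one, map_zero, smul_zero, add_zero] at h'
    exact one_ne_zero h'
  · exact GCar.mk_one_zero_mul_ne hp (by omega)
end

section
/- Let p be an odd prime, 1 ≤ d ≤ n ≤ m, and let R be a local nearring whose additive group (R,+) is isomorphic to G(p^m, p^n, p^d). Then the subgroup L of all non-invertible elements has index p in (R,+), and the multiplicative group R* has order p^(m+n+d−1)·(p−1). -/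
/-- A (left) nearring with (multiplicative) identity: `(R,+)` is a (not necessarily
abelian) group with neutral element `0`, `(R,·)` is a monoid (so with identity
element `i = 1`), and the left distributive law `x·(y+z) = x·y + x·z` holds. -/
class LeftNearring (R : Type*) extends AddGroup R, Monoid R where
  left_distrib : ∀ x y z : R, x * (y + z) = x * y + x * z

lemma two_nsmul_half_nsmul {N : ℕ} (hodd : Odd N) {G : Type*} [AddMonoid G] {x : G}
    (hx : N • x = 0) : 2 • (((N + 1) / 2) • x) = x := by
  obtain ⟨k, hk⟩ := hodd
  have h : ((N + 1) / 2) * 2 = N + 1 := by omega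
  rw [← mul_nsmul, h, succ_nsmul, hx, zero_add]

namespace LeftNearring

variable {R : Type*} [LeftNearring R]

/-- Left multiplication by `x`, as an endomorphism of the additive group. -/
def lmul (x : R) : R →+ R :=
  AddMonoidHom.mk' (fun y => x * y) (left_distrib x)

@[simp]
lemma lmul_apply (x y : R) : lmul x y = x * y := rfl

protected lemma mul_zero' (x : R) : x * 0 = 0 := map_zero (lmul x)

protected lemma mul_neg' (x y : R) : x * -y = -(x * y) := map_neg (lmul x) y

protected lemma mul_nsmul' (x y : R) (k : ℕ) : x * (k • y) = k • (x * y) :=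
  map_nsmul (lmul x) k y

protected lemma neg_one_mul_neg_one_mul (x : R) : (-1) * ((-1) * x) = x := by
  rw [← mul_assoc, LeftNearring.mul_neg', mul_one, neg_neg, one_mul]

/-- The number of units of a local nearring. -/
lemma card_units_add_card [Finite R] (L : AddSubgroup R) (hL : ∀ x : R, x ∈ L ↔ ¬IsUnit x) :
    Nat.card Rˣ + Nat.card L = Nat.card R := by
  have h : Set.range (Units.val : Rˣ → R) = (L : Set R)ᶜ := by
    ext x
    simp only [Set.mem_range, Set.mem_compl_iff, SetLike.mem_coe, hL, not_not]
    rfl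
  have h1 : Nat.card Rˣ = (L : Set R)ᶜ.ncard := by
    rw [← h, ← Nat.card_coe_set_eq]
    exact Nat.card_congr (Equiv.ofInjective _ Units.val_injective)
  have h2 : Nat.card L = (L : Set R).ncard := Nat.card_coe_set_eq _
  rw [h1, h2, add_comm]
  exact Set.ncard_add_ncard_compl _

section Abelianization

variable {A : Type*} [AddCommGroup A] {π : R →+ A}

lemma map_mul_eq_zero (hK : ∀ k, π k = 0 → ∃ x y, x + y = k + (y + x)) (t : R) {k : R}
    (hk : π k = 0) : π (t * k) = 0 := by
  obtain ⟨x, y, h⟩ := hK k hk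
  have h' := congrArg (fun z => π (t * z)) h
  simp only [left_distrib, map_add] at h'
  rw [add_comm (π (t * y))] at h'
  exact right_eq_add.mp h'

/-- Left multiplication induces an endomorphism of the abelianization, compatible with
multiplication by integers. -/
lemma map_mul_eq_nsmul (hK : ∀ k, π k = 0 → ∃ x y, x + y = k + (y + x)) (t : R) {x g : R}
    {q : ℕ} (h : π x = q • π g) : π (t * x) = q • π (t * g) := by
  have h1 : π (-(q • g) + x) = 0 := by simp [h]
  have h2 := map_mul_eq_zero hK t h1
  rw [left_distrib, LeftNearring.mul_neg', LeftNearring.mul_nsmul', map_add, map_neg, map_nsmul,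
    neg_add_eq_zero] at h2
  exact h2.symm

/-- Every sum `g + (-1) * g` agrees, modulo the commutator subgroup, with a fixed point of left
multiplication by `-1`. -/
lemma exists_fixed_lift (hodd : Odd (Nat.card R)) (g : R) :
    ∃ f : R, (-1) * f = f ∧ π f = π g + π ((-1) * g) := by
  set y := g + (-1) * g with hy
  have hly : (-1) * y = (-1) * g + g := by
    rw [hy, left_distrib, LeftNearring.neg_one_mul_neg_one_mul]
  set z := -y + (-1) * y with hz
  have hyz : (-1) * y = y + z := by rw [hz, add_neg_cancel_left]
  have hπz : π z = 0 := by
    rw [hz, hly, hy, map_add, map_neg, map_add, map_add, add_comm (π g), neg_add_cancel]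
  have hlz : (-1) * z = -z := by
    rw [hz, left_distrib, LeftNearring.mul_neg', LeftNearring.neg_one_mul_neg_one_mul]
    simp
  set w := ((Nat.card R + 1) / 2) • z with hw
  have h2w : w + w = z := by
    rw [← two_nsmul]
    exact two_nsmul_half_nsmul hodd (card_nsmul_eq_zero')
  refine ⟨y + w, ?_, ?_⟩
  · rw [left_distrib, hyz, hw, LeftNearring.mul_nsmul', hlz, ← hw, neg_nsmul, ← hw,
      add_assoc, ← h2w, add_neg_cancel_right]
  · rw [map_add, hw, map_nsmul, hπz, smul_zero, add_zero, hy, map_add]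

/-- If the fixed points of left multiplication by `-1` are divisible by `p` in the abelianization
of a finite `p`-group, they lie in the commutator subgroup. -/
lemma map_eq_zero_of_fixed {p N : ℕ} (hcard : Nat.card R = p ^ N) (hodd : Odd (Nat.card R))
    (hK : ∀ k, π k = 0 → ∃ x y, x + y = k + (y + x))
    (hdiv : ∀ f : R, (-1) * f = f → ∃ g, π f = p • π g) {f : R} (hf : (-1) * f = f) :
    π f = 0 := by
  have step : ∀ f : R, (-1) * f = f → ∃ f' : R, (-1) * f' = f' ∧ π f = p • π f' := by
    intro f hf
    obtain ⟨g, hg⟩ := hdiv f hf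
    obtain ⟨f', hf', hfg⟩ := exists_fixed_lift (π := π) hodd g
    have h1 : π f = p • π ((-1) * g) := by
      conv_lhs => rw [← hf]
      exact map_mul_eq_nsmul hK _ hg
    have h2 : 2 • π f = p • π f' := by
      rw [hfg, smul_add, ← hg, ← h1, two_nsmul]
    refine ⟨((Nat.card R + 1) / 2) • f', by rw [LeftNearring.mul_nsmul', hf'], ?_⟩
    rw [map_nsmul, smul_comm, ← h2, smul_comm]
    refine (two_nsmul_half_nsmul hodd ?_).symm
    rw [← map_nsmul, card_nsmul_eq_zero', map_zero]
  have iter : ∀ k : ℕ, ∃ f' : R, (-1) * f' = f' ∧ π f = p ^ k • π f' := by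
    intro k
    induction k with
    | zero => exact ⟨f, hf, by simp⟩
    | succ k ih =>
      obtain ⟨f', hf', h⟩ := ih
      obtain ⟨f'', hf'', h'⟩ := step f' hf'
      exact ⟨f'', hf'', by rw [h, h', pow_succ, mul_smul]⟩
  obtain ⟨f', -, h⟩ := iter N
  rw [h, ← map_nsmul, ← hcard, card_nsmul_eq_zero', map_zero]

variable [Finite R]

/-- A fixed-point-free left multiplication by `-1` forces commutativity of addition. -/
lemma exists_fixed_ne_zero (hnc : ∃ x y : R, x + y ≠ y + x) :
    ∃ c : R, c ≠ 0 ∧ (-1) * c = c := by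
  by_contra! hno
  have hinj : Function.Injective fun x : R => -x + (-1) * x := by
    intro x y h
    have h' : (-1) * (x - y) = x - y := by
      have h'' : -x + (-1) * x = -y + (-1) * y := h
      rw [neg_add_eq_iff_eq_add, ← add_assoc] at h''
      rw [sub_eq_add_neg, left_distrib, LeftNearring.mul_neg', h'', add_neg_cancel_right]
    by_contra hxy
    exact hno _ (sub_ne_zero.mpr hxy) h'
  have hneg : ∀ t : R, (-1) * t = -t := by
    intro t
    obtain ⟨x, rfl⟩ := Finite.surjective_of_injective hinj t
    simp only [left_distrib, LeftNearring.mul_neg', LeftNearring.neg_one_mul_neg_one_mul,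
      neg_add_rev, neg_neg]
  obtain ⟨x, y, h⟩ := hnc
  apply h
  have h1 := hneg (y + x)
  rw [left_distrib, hneg, hneg, neg_add_rev] at h1
  have h2 := congrArg Neg.neg h1
  simpa using h2

/-- If the units of a finite local nearring of odd order are the elements that are nonzero in the
quotient by the Frattini subgroup, and the commutator subgroup is cyclic and nontrivial, then that
quotient is cyclic. -/
lemma exists_generator_of_cyclic_commutator {p N : ℕ} (hcard : Nat.card R = p ^ N)
    (hodd : Odd (Nat.card R)) (hK : ∀ k, π k = 0 → ∃ x y, x + y = k + (y + x))
    (hcyc : IsAddCyclic π.ker) (hnc : ∃ x y : R, x + y ≠ y + x)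
    {B : Type*} [AddCommGroup B] (ρ : A →+ B) (hπ : Function.Surjective π)
    (hρ : ∀ a, ρ a = 0 → ∃ b, a = p • b) (hL : ∀ x : R, ¬ IsUnit x → ρ (π x) = 0)
    (hL' : ∀ x : R, IsUnit x → ρ (π x) ≠ 0) :
    ∃ x : R, ∀ y, ∃ j : ℤ, ρ (π y) = j • ρ (π x) := by
  have hdiv : ∀ f : R, (-1) * f = f → ∃ g, π f = p • π g := by
    intro f hf
    have hfu : ¬ IsUnit f := by
      intro hu
      have h1 : (-1 : R) = 1 := by
        obtain ⟨v, rfl⟩ := hu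
        have := congrArg (fun z => z * (↑v⁻¹ : R)) hf
        simpa [mul_assoc] using this
      have h2 : (2 : ℕ) • (1 : R) = 0 := by
        rw [two_nsmul]; nth_rewrite 1 [← h1]; exact neg_add_cancel 1
      have h3 : (1 : R) = 0 := by
        rw [← two_nsmul_half_nsmul (x := (1 : R)) hodd card_nsmul_eq_zero', smul_comm, h2,
          smul_zero]
      apply hL' 1 isUnit_one
      rw [h3, map_zero, map_zero]
    obtain ⟨b, hb⟩ := hρ _ (hL f hfu)
    obtain ⟨g, rfl⟩ := hπ b
    exact ⟨g, hb⟩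
  have hfix : ∀ f : R, (-1) * f = f → π f = 0 := fun f hf =>
    map_eq_zero_of_fixed hcard hodd hK hdiv hf
  have hcomm : ∀ x y : R, π x = 0 → π y = 0 → x + y = y + x := by
    intro x y hx hy
    have := hcyc.isAddCommutative.is_comm.comm (⟨x, hx⟩ : π.ker) ⟨y, hy⟩
    exact congrArg Subtype.val this
  have hmulfix : ∀ c : R, (-1) * c = c → ∀ x, π (c * x) = 0 := fun c hc x =>
    hfix _ (by rw [← mul_assoc, hc])
  have hzero : ∀ x : R, 0 * x = 0 := by
    intro x
    have h0 := hmulfix 0 (LeftNearring.mul_zero' _)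
    obtain ⟨s, t, h⟩ := hK _ (h0 x)
    have h1 := congrArg (fun z => (0 : R) * z) h
    simp only [left_distrib, ← mul_assoc, LeftNearring.mul_zero'] at h1
    rw [hcomm _ _ (h0 s) (h0 t)] at h1
    exact right_eq_add.mp h1
  obtain ⟨c, hc0, hc⟩ := exists_fixed_ne_zero hnc
  have hker : ∀ u : R, c * u = 0 → ρ (π u) = 0 := by
    intro u hu
    apply hL
    rintro ⟨v, rfl⟩
    apply hc0
    have := congrArg (fun z => z * (↑v⁻¹ : R)) hu
    simpa [mul_assoc, hzero] using this
  have hle : (lmul c).range ≤ π.ker := by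
    rintro _ ⟨x, rfl⟩
    exact hmulfix c hc x
  have hcyc' : IsAddCyclic (lmul c).range :=
    isAddCyclic_of_injective (AddSubgroup.inclusion hle) (AddSubgroup.inclusion_injective hle)
  obtain ⟨⟨_, x, rfl⟩, hx⟩ := hcyc'.exists_generator
  refine ⟨x, fun y => ?_⟩
  obtain ⟨j, hj⟩ := AddSubgroup.mem_zmultiples_iff.mp (hx ⟨lmul c y, y, rfl⟩)
  have hj' : j • lmul c x = lmul c y := congrArg Subtype.val hj
  refine ⟨j, ?_⟩
  have h := hker (y - j • x) (by
    rw [← lmul_apply, map_sub, map_zsmul, hj', sub_self])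
  rwa [map_sub, map_sub, sub_eq_zero, map_zsmul, map_zsmul] at h

/-- In a finite local nearring whose additive group is a two-generated `p`-group (`p` odd) with
nontrivial cyclic commutator subgroup, the nonunits have index `p`. -/
theorem index_nonunits_of_cyclic_commutator {p N : ℕ} (hp : p.Prime) (hp2 : Odd p)
    (hcard : Nat.card R = p ^ N) (hK : ∀ k, π k = 0 → ∃ x y, x + y = k + (y + x))
    (hcyc : IsAddCyclic π.ker) (hnc : ∃ x y : R, x + y ≠ y + x)
    {B : Type*} [AddCommGroup B] (ρ : A →+ B) (hπ : Function.Surjective π)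
    (hρs : Function.Surjective ρ) (hB : Nat.card B = p ^ 2)
    (hρ : ∀ a, ρ a = 0 ↔ ∃ b, a = p • b)
    (L : AddSubgroup R) (hL : ∀ x : R, x ∈ L ↔ ¬IsUnit x) : L.index = p := by
  have hcardodd : Odd (Nat.card R) := hcard ▸ hp2.pow
  have hpB : ∀ b : B, p • b = 0 := by
    intro b
    obtain ⟨a, rfl⟩ := hρs b
    rw [← map_nsmul]
    exact (hρ _).mpr ⟨a, rfl⟩
  have hnotcyc : ∀ b : B, ∃ b' : B, ∀ j : ℤ, b' ≠ j • b := by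
    intro b
    by_contra! h
    have htop : AddSubgroup.zmultiples b = ⊤ := by
      rw [AddSubgroup.eq_top_iff']
      intro b'
      obtain ⟨j, hj⟩ := h b'
      exact ⟨j, hj.symm⟩
    have h1 : addOrderOf b = p ^ 2 := by
      rw [← Nat.card_zmultiples, htop, AddSubgroup.card_top, hB]
    have h2 : p ^ 2 ∣ p := h1 ▸ addOrderOf_dvd_of_nsmul_eq_zero (hpB b)
    have h3 := Nat.le_of_dvd hp.pos h2
    nlinarith [hp.two_le]
  have hL' : ∀ x : R, IsUnit x → ρ (π x) ≠ 0 := by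
    rintro _ ⟨u, rfl⟩ h
    obtain ⟨b, hb⟩ := (hρ _).mp h
    obtain ⟨g, rfl⟩ := hπ b
    obtain ⟨b', hb'⟩ := hnotcyc 0
    obtain ⟨a, rfl⟩ := hρs b'
    obtain ⟨y, rfl⟩ := hπ a
    apply hb' 0
    have h1 := map_mul_eq_nsmul hK (y * (↑u⁻¹ : R)) hb
    rw [mul_assoc, Units.inv_mul, mul_one] at h1
    rw [smul_zero, h1, map_nsmul, hpB]
  set Φ := (ρ.comp π).ker with hΦ
  have hle : Φ ≤ L := by
    intro x hx
    rw [hL]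
    exact fun hu => hL' x hu hx
  have hidx : Φ.index = p ^ 2 := by
    rw [hΦ, AddSubgroup.index_ker, AddMonoidHom.range_eq_top.mpr
      (by simpa using hρs.comp hπ),
      AddSubgroup.card_top, hB]
  have hdvd : L.index ∣ p ^ 2 := hidx ▸ AddSubgroup.index_dvd_of_le hle
  obtain ⟨k, hk, hkL⟩ := (Nat.dvd_prime_pow hp).mp hdvd
  interval_cases k
  · rw [pow_zero, AddSubgroup.index_eq_one] at hkL
    exact absurd isUnit_one ((hL 1).mp (hkL ▸ AddSubgroup.mem_top 1))
  · rwa [pow_one] at hkL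
  · exfalso
    have hrel : Φ.relIndex L = 1 := by
      have := AddSubgroup.relIndex_mul_index hle
      rw [hidx, hkL] at this
      exact Nat.eq_of_mul_eq_mul_right (pow_pos hp.pos 2) (by rw [this, one_mul])
    have hLΦ : L ≤ Φ := AddSubgroup.relIndex_eq_one.mp hrel
    obtain ⟨x, hx⟩ := exists_generator_of_cyclic_commutator hcard hcardodd hK hcyc hnc ρ hπ
      (fun a => (hρ a).mp) (fun x h => hLΦ ((hL x).mpr h)) hL'
    obtain ⟨b', hb'⟩ := hnotcyc (ρ (π x))
    obtain ⟨a, rfl⟩ := hρs b'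
    obtain ⟨y, rfl⟩ := hπ a
    obtain ⟨j, hj⟩ := hx y
    exact hb' j hj

end Abelianization

end LeftNearring

lemma ZMod.castHom_eq_zero_iff_exists_nsmul {p k : ℕ} (h : p ∣ p ^ k) (a : ZMod (p ^ k)) :
    ZMod.castHom h (ZMod p) a = 0 ↔ ∃ b, a = p • b := by
  constructor
  · intro ha
    obtain ⟨j, rfl⟩ := ZMod.intCast_surjective a
    rw [map_intCast, ZMod.intCast_zmod_eq_zero_iff_dvd _ _] at ha
    obtain ⟨i, rfl⟩ := ha
    exact ⟨i, by simp⟩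
  · rintro ⟨b, rfl⟩
    rw [map_nsmul, nsmul_eq_mul, CharP.cast_eq_zero, zero_mul]

section Concrete

variable {p m n d : ℕ} {R : Type*} [AddGroup R]

/-- A map to `G(p^m, p^n, p^d)` turning sums into products, followed by the projection to the first
two coordinates. -/
def abelianProj (e : R → GCar p m n d) (he : ∀ x y, e (x + y) = Gmul p m n d (e x) (e y)) :
    R →+ ZMod (p ^ m) × ZMod (p ^ n) :=
  AddMonoidHom.mk' (fun x => ((e x).1, (e x).2.1)) fun x y => by rw [he]; rfl

variable {e : R → GCar p m n d} {he : ∀ x y, e (x + y) = Gmul p m n d (e x) (e y)}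

lemma abelianProj_eq_zero_iff (x : R) :
    abelianProj e he x = 0 ↔ (e x).1 = 0 ∧ (e x).2.1 = 0 := Prod.mk_eq_zero

lemma abelianProj_surjective (hs : Function.Surjective e) :
    Function.Surjective (abelianProj e he) := by
  rintro ⟨a, b⟩
  obtain ⟨x, hx⟩ := hs ((a, b, 0) : ZMod (p ^ m) × ZMod (p ^ n) × ZMod (p ^ d))
  exact ⟨x, by simp only [abelianProj, AddMonoidHom.mk'_apply, hx]⟩

lemma exists_commutator_of_abelianProj_eq_zero (hp : p.Prime) (hdn : d ≤ n) (hdm : d ≤ m)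
    (hb : Function.Bijective e) (k : R) (hk : abelianProj e he k = 0) :
    ∃ x y, x + y = k + (y + x) := by
  rw [abelianProj_eq_zero_iff] at hk
  have : NeZero (p ^ d) := ⟨pow_ne_zero _ hp.ne_zero⟩
  obtain ⟨a, ha⟩ : ∃ a : ZMod (p ^ m), (ZMod.cast a : ZMod (p ^ d)) = (e k).2.2 :=
    ⟨((e k).2.2.val : ℕ), by rw [ZMod.cast_natCast (pow_dvd_pow p hdm), ZMod.natCast_zmod_val]⟩
  obtain ⟨x, hx⟩ := hb.2
    ((a, 0, 0) : ZMod (p ^ m) × ZMod (p ^ n) × ZMod (p ^ d))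
  obtain ⟨y, hy⟩ := hb.2 ((0, 1, 0) : ZMod (p ^ m) × ZMod (p ^ n) × ZMod (p ^ d))
  refine ⟨x, y, hb.1 ?_⟩
  rw [he, he, he, hx, hy]
  refine Prod.ext ?_ (Prod.ext ?_ ?_)
  · simp [Gmul, hk.1]
  · simp [Gmul, hk.2]
  · simp [Gmul, hk.2, ha, ZMod.cast_one (pow_dvd_pow p hdn)]

lemma isAddCyclic_ker_abelianProj (hb : Function.Injective e) :
    IsAddCyclic (abelianProj e he).ker := by
  have hk : ∀ x : (abelianProj e he).ker, (e x).1 = 0 ∧ (e x).2.1 = 0 := fun x =>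
    (abelianProj_eq_zero_iff _).mp x.2
  refine isAddCyclic_of_injective (AddMonoidHom.mk' (fun x : (abelianProj e he).ker => (e x).2.2)
    fun x y => ?_) fun x y h => Subtype.ext (hb ?_)
  · rw [AddSubgroup.coe_add, he]
    simp [Gmul, (hk x).2]
  · exact Prod.ext ((hk x).1.trans (hk y).1.symm) (Prod.ext ((hk x).2.trans (hk y).2.symm) h)

lemma exists_add_ne_add (hp : p.Prime) (hd : 1 ≤ d) (hdn : d ≤ n) (hdm : d ≤ m)
    (he : ∀ x y, e (x + y) = Gmul p m n d (e x) (e y)) (hs : Function.Surjective e) :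
    ∃ x y : R, x + y ≠ y + x := by
  obtain ⟨x, hx⟩ := hs ((1, 0, 0) : ZMod (p ^ m) × ZMod (p ^ n) × ZMod (p ^ d))
  obtain ⟨y, hy⟩ := hs ((0, 1, 0) : ZMod (p ^ m) × ZMod (p ^ n) × ZMod (p ^ d))
  have : Fact (1 < p ^ d) := ⟨Nat.one_lt_pow (by omega) hp.one_lt⟩
  refine ⟨x, y, fun h => ?_⟩
  have h' := congrArg (fun z => (e z).2.2) h
  simp only [he, hx, hy, Gmul] at h'
  simp [ZMod.cast_one (pow_dvd_pow p hdm), ZMod.cast_one (pow_dvd_pow p hdn)] at h'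

end Concrete

/-- Let `R` be a local nearring whose additive group is isomorphic to
`G(p^m, p^n, p^d)` (`p` an odd prime, `1 ≤ d ≤ n ≤ m`). Then the subgroup `L` of all
non-invertible elements has index `p` in `(R,+)`, and the multiplicative group `R*`
has order `p^(m+n+d-1)·(p-1)`. -/
theorem index_nonunits_eq (p m n d : ℕ) (hp : p.Prime) (hodd : Odd p)
    (hd : 1 ≤ d) (hdn : d ≤ n) (hnm : n ≤ m)
    (R : Type*) [LeftNearring R]
    (L : AddSubgroup R) (hL : ∀ x : R, x ∈ L ↔ ¬IsUnit x) :
    letI : Group (GCar p m n d) := Ggroup p m n d hdn (hdn.trans hnm)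
    Nonempty (Multiplicative R ≃* GCar p m n d) →
      L.index = p ∧ Nat.card Rˣ = p ^ (m + n + d - 1) * (p - 1) := by
  rintro ⟨e₀⟩
  have hdm : d ≤ m := hdn.trans hnm
  let : Group (GCar p m n d) := Ggroup p m n d hdn hdm
  let e : R → GCar p m n d := fun x => e₀ (Multiplicative.ofAdd x)
  have he : ∀ x y, e (x + y) = Gmul p m n d (e x) (e y) := fun x y =>
    map_mul e₀ (Multiplicative.ofAdd x) (Multiplicative.ofAdd y)
  have hb : Function.Bijective e := e₀.bijective.comp Multiplicative.ofAdd.bijective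
  have hcard : Nat.card R = p ^ (m + n + d) := by
    rw [Nat.card_congr (Equiv.ofBijective e hb)]
    change Nat.card (ZMod (p ^ m) × ZMod (p ^ n) × ZMod (p ^ d)) = _
    rw [Nat.card_prod, Nat.card_prod, Nat.card_zmod, Nat.card_zmod, Nat.card_zmod]
    ring
  have : Finite R := Nat.finite_of_card_ne_zero (hcard ▸ pow_ne_zero _ hp.ne_zero)
  have hpm : p ∣ p ^ m := dvd_pow_self p (by omega)
  have hpn : p ∣ p ^ n := dvd_pow_self p (by omega)
  let ρ : ZMod (p ^ m) × ZMod (p ^ n) →+ ZMod p × ZMod p :=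
    AddMonoidHom.prodMap (ZMod.castHom hpm (ZMod p)).toAddMonoidHom
      (ZMod.castHom hpn (ZMod p)).toAddMonoidHom
  have hindex : L.index = p := by
    refine LeftNearring.index_nonunits_of_cyclic_commutator (π := abelianProj e he) hp hodd hcard
      (exists_commutator_of_abelianProj_eq_zero hp hdn hdm hb) (isAddCyclic_ker_abelianProj hb.1)
      (exists_add_ne_add hp hd hdn hdm he hb.2) ρ (abelianProj_surjective hb.2)
      ((ZMod.castHom_surjective hpm).prodMap (ZMod.castHom_surjective hpn))
      (by rw [Nat.card_prod, Nat.card_zmod, sq]) ?_ L hL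
    rintro ⟨a, b⟩
    have h : ρ (a, b) = 0 ↔
        ZMod.castHom hpm (ZMod p) a = 0 ∧ ZMod.castHom hpn (ZMod p) b = 0 := Prod.mk_eq_zero
    rw [h, ZMod.castHom_eq_zero_iff_exists_nsmul, ZMod.castHom_eq_zero_iff_exists_nsmul]
    constructor
    · rintro ⟨⟨a', rfl⟩, ⟨b', rfl⟩⟩
      exact ⟨(a', b'), rfl⟩
    · rintro ⟨⟨a', b'⟩, h'⟩
      exact ⟨⟨a', congrArg Prod.fst h'⟩, ⟨b', congrArg Prod.snd h'⟩⟩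
  refine ⟨hindex, ?_⟩
  have hN : p ^ (m + n + d) = p ^ (m + n + d - 1) * p := by
    rw [← pow_succ]
    congr 1
    omega
  have hLcard : Nat.card L = p ^ (m + n + d - 1) := by
    have := L.card_mul_index
    rw [hindex, hcard, hN] at this
    exact Nat.eq_of_mul_eq_mul_right hp.pos this
  have := LeftNearring.card_units_add_card L hL
  rw [hLcard, hcard, hN] at this
  rw [Nat.mul_sub, mul_one]
  omega
end

section
/- Let p be an odd prime and 1 ≤ d ≤ n ≤ m. On the set R = (ℤ/p^m) × (ℤ/p^n) × (ℤ/p^d), equip R with the addition (x1,x2,x3)+(y1,y2,y3) = (x1+y1, x2+y2, x3+y3 − x̄2·ȳ1) (bars denoting reduction mod p^d) and the multiplication (x1,x2,x3)·(y1,y2,y3) = (x1·y1, x2·y1 + x1·y2, −x̄1·x̄2·binom(y1,2) + x̄3·ȳ1 + x̄1²·ȳ3), where binom(y1,2) = y1(y1−1)/2 is computed from an integer representative of y1 and reduced mod p^d. Then R is a zero-symmetric local nearring with identity (1,0,0), whose additive group is the group G(p^m,p^n,p^d), and whose non-invertible elements are exactly the triples (x1,x2,x3) with p ∣ x1. -/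
/-- The multiplication `(x1,x2,x3)·(y1,y2,y3) =
(x1·y1, x2·y1 + x1·y2, −x̄1·x̄2·binom(y1,2) + x̄3·ȳ1 + x̄1²·ȳ3)` on the carrier
`ZMod (p^m) × ZMod (p^n) × ZMod (p^d)`, where the bars denote reduction modulo `p^d`
(resp. modulo `p^n` in the second component) and `binom(y1,2) = y1(y1−1)/2` is
computed from the canonical integer representative of `y1` and reduced mod `p^d`. -/
def Nmul (p m n d : ℕ) (x y : GCar p m n d) : GCar p m n d :=
  (x.1 * y.1,
    x.2.1 * (ZMod.cast y.1 : ZMod (p ^ n)) + (ZMod.cast x.1 : ZMod (p ^ n)) * y.2.1,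
    -((ZMod.cast x.1 : ZMod (p ^ d)) * (ZMod.cast x.2.1 : ZMod (p ^ d)) *
        ((y.1.val.choose 2 : ℕ) : ZMod (p ^ d))) +
      x.2.2 * (ZMod.cast y.1 : ZMod (p ^ d)) +
      (ZMod.cast x.1 : ZMod (p ^ d)) ^ 2 * y.2.2)

/-- `NearringProps T add mul e nonunit` says that the nearring structure on `T` has
addition `add`, multiplication `mul` and multiplicative identity `e`, that it is
zero-symmetric, that its non-invertible elements are exactly those satisfying
`nonunit`, and that it is local (the non-invertible elements form a subgroup of
`(T,+)`). -/
def NearringProps (T : Type*) [LeftNearring T] (add mul : T → T → T) (e : T)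
    (nonunit : T → Prop) : Prop :=
  (∀ x y : T, x + y = add x y) ∧
  (∀ x y : T, x * y = mul x y) ∧
  (1 : T) = e ∧
  (∀ x : T, (0 : T) * x = 0) ∧
  (∀ x : T, ¬IsUnit x ↔ nonunit x) ∧
  ∃ L : AddSubgroup T, ∀ x : T, x ∈ L ↔ ¬IsUnit x

/-- Modulo an odd number, the binomial coefficient `k.choose 2` is `k (k - 1)` times the inverse
of two. -/
theorem exists_natCast_choose_two_eq {q : ℕ} (hq : Odd q) :
    ∃ h : ZMod q, 2 * h = 1 ∧
      ∀ k : ℕ, ((k.choose 2 : ℕ) : ZMod q) = h * ((k : ZMod q) * ((k : ZMod q) - 1)) := by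
  have h2 : (2 : ZMod q) * (2 : ZMod q)⁻¹ = 1 := by
    have := ZMod.coe_mul_inv_eq_one (n := q) 2 (Nat.coprime_two_left.mpr hq)
    exact_mod_cast this
  refine ⟨2⁻¹, h2, fun k => ?_⟩
  have hk : (2 : ZMod q) * ((k.choose 2 : ℕ) : ZMod q) = k * ((k : ZMod q) - 1) := by
    cases k with
    | zero => simp
    | succ j =>
      have hc : 2 * (j + 1).choose 2 = (j + 1) * j := by
        rw [Nat.choose_two_right]
        exact Nat.mul_div_cancel' (Nat.even_mul_pred_self (j + 1)).two_dvd
      have := congrArg (Nat.cast : ℕ → ZMod q) hc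
      push_cast at this ⊢
      rw [this]; ring
  linear_combination (2 : ZMod q)⁻¹ * hk - ((k.choose 2 : ℕ) : ZMod q) * h2

theorem ZMod.cast_cast_of_dvd {a b c : ℕ} [NeZero a] (hba : b ∣ a) (hcb : c ∣ b) (x : ZMod a) :
    (ZMod.cast (ZMod.cast x : ZMod b) : ZMod c) = ZMod.cast x :=
  RingHom.congr_fun (ZMod.castHom_comp hcb hba) x

theorem ZMod.isUnit_iff_not_dvd_val {p k : ℕ} (hp : p.Prime) (hk : k ≠ 0) (x : ZMod (p ^ k)) :
    IsUnit x ↔ ¬p ∣ x.val := by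
  have : NeZero (p ^ k) := ⟨pow_ne_zero _ hp.ne_zero⟩
  conv_lhs => rw [← ZMod.natCast_zmod_val x]
  rw [ZMod.isUnit_iff_coprime, Nat.coprime_pow_right_iff (Nat.pos_of_ne_zero hk),
    Nat.coprime_comm, hp.coprime_iff_not_dvd]

section

variable {p m n d : ℕ}

theorem GCar.ext {x y : GCar p m n d} (h₁ : x.1 = y.1) (h₂ : x.2.1 = y.2.1)
    (h₃ : x.2.2 = y.2.2) : x = y :=
  Prod.ext h₁ (Prod.ext h₂ h₃)

/-- The identity `(1, 0, 0)` of the nearring on `GCar p m n d`. -/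
def GCar.unit (p m n d : ℕ) : GCar p m n d :=
  ((1, 0, 0) : ZMod (p ^ m) × ZMod (p ^ n) × ZMod (p ^ d))

@[simp]
theorem GCar.unit_fst : (GCar.unit p m n d).1 = 1 := rfl

@[simp]
theorem GCar.unit_snd_fst : (GCar.unit p m n d).2.1 = 0 := rfl

@[simp]
theorem GCar.unit_snd_snd : (GCar.unit p m n d).2.2 = 0 := rfl

theorem Gmul_fst (x y : GCar p m n d) : (Gmul p m n d x y).1 = x.1 + y.1 := rfl

theorem Gmul_snd_fst (x y : GCar p m n d) : (Gmul p m n d x y).2.1 = x.2.1 + y.2.1 := rfl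

theorem Gmul_snd_snd (x y : GCar p m n d) : (Gmul p m n d x y).2.2 =
    x.2.2 + y.2.2 - (ZMod.cast x.2.1 : ZMod (p ^ d)) * (ZMod.cast y.1 : ZMod (p ^ d)) := rfl

theorem Nmul_fst (x y : GCar p m n d) : (Nmul p m n d x y).1 = x.1 * y.1 := rfl

theorem Nmul_snd_fst (x y : GCar p m n d) : (Nmul p m n d x y).2.1 =
    x.2.1 * (ZMod.cast y.1 : ZMod (p ^ n)) + (ZMod.cast x.1 : ZMod (p ^ n)) * y.2.1 := rfl

/-- The third coordinate of `Nmul` with the binomial coefficient written as a polynomial. -/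
theorem exists_Nmul_snd_snd_eq (hp : p.Prime) (hodd : Odd p) :
    ∃ h : ZMod (p ^ d), 2 * h = 1 ∧ ∀ x y : GCar p m n d, (Nmul p m n d x y).2.2 =
      -((ZMod.cast x.1 : ZMod (p ^ d)) * (ZMod.cast x.2.1 : ZMod (p ^ d)) *
          (h * ((ZMod.cast y.1 : ZMod (p ^ d)) * ((ZMod.cast y.1 : ZMod (p ^ d)) - 1)))) +
        x.2.2 * (ZMod.cast y.1 : ZMod (p ^ d)) +
        (ZMod.cast x.1 : ZMod (p ^ d)) ^ 2 * y.2.2 := by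
  have : NeZero (p ^ m) := ⟨pow_ne_zero _ hp.ne_zero⟩
  obtain ⟨h, h2, hc⟩ := exists_natCast_choose_two_eq (hodd.pow (n := d))
  refine ⟨h, h2, fun x y => ?_⟩
  rw [Nmul, hc, ZMod.natCast_val]

theorem Nmul_assoc (hp : p.Prime) (hodd : Odd p) (hdn : d ≤ n) (hnm : n ≤ m)
    (x y z : GCar p m n d) :
    Nmul p m n d (Nmul p m n d x y) z = Nmul p m n d x (Nmul p m n d y z) := by
  have : NeZero (p ^ m) := ⟨pow_ne_zero _ hp.ne_zero⟩
  have hn : p ^ n ∣ p ^ m := pow_dvd_pow p hnm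
  have hd : p ^ d ∣ p ^ n := pow_dvd_pow p hdn
  obtain ⟨h, h2, hN⟩ := exists_Nmul_snd_snd_eq (m := m) (n := n) (d := d) hp hodd
  refine GCar.ext ?_ ?_ ?_ <;>
    simp only [hN, Nmul_fst, Nmul_snd_fst, ZMod.cast_add hd, ZMod.cast_mul hd, ZMod.cast_mul hn,
      ZMod.cast_mul (hd.trans hn), ZMod.cast_cast_of_dvd hn hd] <;> ring

theorem Nmul_Gmul (hp : p.Prime) (hodd : Odd p) (hdn : d ≤ n) (hnm : n ≤ m)
    (x y z : GCar p m n d) :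
    Nmul p m n d x (Gmul p m n d y z) =
      Gmul p m n d (Nmul p m n d x y) (Nmul p m n d x z) := by
  have : NeZero (p ^ m) := ⟨pow_ne_zero _ hp.ne_zero⟩
  have hn : p ^ n ∣ p ^ m := pow_dvd_pow p hnm
  have hd : p ^ d ∣ p ^ n := pow_dvd_pow p hdn
  obtain ⟨h, h2, hN⟩ := exists_Nmul_snd_snd_eq (m := m) (n := n) (d := d) hp hodd
  refine GCar.ext ?_ ?_ ?_ <;>
    simp only [hN, Nmul_fst, Nmul_snd_fst, Gmul_fst, Gmul_snd_fst, Gmul_snd_snd,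
      ZMod.cast_add hd, ZMod.cast_mul hd, ZMod.cast_add hn,
      ZMod.cast_mul (hd.trans hn), ZMod.cast_add (hd.trans hn), ZMod.cast_cast_of_dvd hn hd]
  · ring
  · ring
  · linear_combination (-(ZMod.cast x.1 : ZMod (p ^ d)) * (ZMod.cast x.2.1 : ZMod (p ^ d)) *
      (ZMod.cast y.1 : ZMod (p ^ d)) * (ZMod.cast z.1 : ZMod (p ^ d))) * h2

theorem unit_Nmul (hp : p.Prime) (hodd : Odd p) (hdn : d ≤ n) (hnm : n ≤ m)
    (x : GCar p m n d) : Nmul p m n d (GCar.unit p m n d) x = x := by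
  obtain ⟨h, -, hN⟩ := exists_Nmul_snd_snd_eq (m := m) (n := n) (d := d) hp hodd
  refine GCar.ext ?_ ?_ ?_ <;>
    simp [hN, Nmul_fst, Nmul_snd_fst, ZMod.cast_one (pow_dvd_pow p hnm),
      ZMod.cast_one (pow_dvd_pow p (hdn.trans hnm)), ZMod.cast_zero]

theorem Nmul_unit (hp : p.Prime) (hodd : Odd p) (hdn : d ≤ n) (hnm : n ≤ m)
    (x : GCar p m n d) : Nmul p m n d x (GCar.unit p m n d) = x := by
  obtain ⟨h, -, hN⟩ := exists_Nmul_snd_snd_eq (m := m) (n := n) (d := d) hp hodd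
  refine GCar.ext ?_ ?_ ?_ <;>
    simp [hN, Nmul_fst, Nmul_snd_fst, ZMod.cast_one (pow_dvd_pow p hnm),
      ZMod.cast_one (pow_dvd_pow p (hdn.trans hnm))]

/-- Elements whose first coordinate is a unit are right invertible. -/
theorem exists_Nmul_eq_unit (hdn : d ≤ n) (hnm : n ≤ m)
    (x : GCar p m n d) (hx : IsUnit x.1) :
    ∃ y : GCar p m n d, IsUnit y.1 ∧ Nmul p m n d x y = GCar.unit p m n d := by
  have hn : p ^ n ∣ p ^ m := pow_dvd_pow p hnm
  have hd : p ^ d ∣ p ^ m := pow_dvd_pow p (hdn.trans hnm)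
  obtain ⟨y₁, hy⟩ := hx.exists_right_inv
  have hyn : (ZMod.cast x.1 : ZMod (p ^ n)) * ZMod.cast y₁ = 1 := by
    rw [← ZMod.cast_mul hn, hy, ZMod.cast_one hn]
  have hyd : (ZMod.cast x.1 : ZMod (p ^ d)) * ZMod.cast y₁ = 1 := by
    rw [← ZMod.cast_mul hd, hy, ZMod.cast_one hd]
  refine ⟨((y₁, -(x.2.1 * (ZMod.cast y₁ : ZMod (p ^ n)) ^ 2),
    ((ZMod.cast x.1 : ZMod (p ^ d)) * (ZMod.cast x.2.1 : ZMod (p ^ d)) *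
        ((y₁.val.choose 2 : ℕ) : ZMod (p ^ d)) - x.2.2 * (ZMod.cast y₁ : ZMod (p ^ d))) *
      (ZMod.cast y₁ : ZMod (p ^ d)) ^ 2) : ZMod (p ^ m) × ZMod (p ^ n) × ZMod (p ^ d)),
    IsUnit.of_mul_eq_one_right _ hy, GCar.ext hy ?_ ?_⟩
  · simp only [Nmul, GCar.unit]
    linear_combination (-x.2.1 * (ZMod.cast y₁ : ZMod (p ^ n))) * hyn
  · simp only [Nmul, GCar.unit]
    linear_combination ((ZMod.cast x.1 : ZMod (p ^ d)) * (ZMod.cast x.2.1 : ZMod (p ^ d)) *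
        ((y₁.val.choose 2 : ℕ) : ZMod (p ^ d)) - x.2.2 * (ZMod.cast y₁ : ZMod (p ^ d))) *
      ((ZMod.cast x.1 : ZMod (p ^ d)) * (ZMod.cast y₁ : ZMod (p ^ d)) + 1) * hyd

/-- The nearring on `GCar p m n d` with addition `Gmul` and multiplication `Nmul`. -/
@[reducible]
def GCar.leftNearring (hp : p.Prime) (hodd : Odd p) (hdn : d ≤ n) (hnm : n ≤ m) :
    LeftNearring (GCar p m n d) :=
  let G : Group (GCar p m n d) := Ggroup p m n d hdn (hdn.trans hnm)
  { add := Gmul p m n d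
    zero := G.one
    neg := G.inv
    add_assoc := G.mul_assoc
    zero_add := G.one_mul
    add_zero := G.mul_one
    neg_add_cancel := G.inv_mul_cancel
    nsmul := @nsmulRec _ ⟨G.one⟩ ⟨Gmul p m n d⟩
    zsmul := @zsmulRec _ ⟨G.one⟩ ⟨Gmul p m n d⟩ ⟨G.inv⟩ (@nsmulRec _ ⟨G.one⟩ ⟨Gmul p m n d⟩)
    mul := Nmul p m n d
    one := GCar.unit p m n d
    mul_assoc := Nmul_assoc hp hodd hdn hnm
    one_mul := unit_Nmul hp hodd hdn hnm
    mul_one := Nmul_unit hp hodd hdn hnm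
    npow := @npowRec _ ⟨GCar.unit p m n d⟩ ⟨Nmul p m n d⟩
    npow_zero := fun _ => rfl
    npow_succ := fun _ _ => rfl
    left_distrib := Nmul_Gmul hp hodd hdn hnm }

theorem GCar.isUnit_iff_isUnit_fst (hp : p.Prime) (hodd : Odd p) (hdn : d ≤ n) (hnm : n ≤ m)
    (x : GCar p m n d) :
    letI := GCar.leftNearring hp hodd hdn hnm
    IsUnit x ↔ IsUnit x.1 := by
  let := GCar.leftNearring hp hodd hdn hnm
  constructor
  · intro hx
    obtain ⟨y, hy⟩ := hx.exists_right_inv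
    exact IsUnit.of_mul_eq_one y.1 (congrArg Prod.fst hy)
  · intro hx
    obtain ⟨y, hy₁, hxy⟩ := exists_Nmul_eq_unit hdn hnm x hx
    obtain ⟨z, -, hyz⟩ := exists_Nmul_eq_unit hdn hnm y hy₁
    have hxy' : x * y = 1 := hxy
    have hyz' : y * z = 1 := hyz
    have hxz : x = z := left_inv_eq_right_inv hxy' hyz'
    exact ⟨⟨x, y, hxy', hxz ▸ hyz'⟩, rfl⟩

end

/-- For an odd prime `p` and `1 ≤ d ≤ n ≤ m`, the carrier
`ZMod (p^m) × ZMod (p^n) × ZMod (p^d)` equipped with the addition `Gmul` (the group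
operation of `G(p^m,p^n,p^d)`) and the multiplication `Nmul` is a zero-symmetric
local nearring with identity `(1,0,0)` whose additive group is `G(p^m,p^n,p^d)` and
whose non-invertible elements are exactly the triples `(x1,x2,x3)` with `p ∣ x1`. -/
theorem explicit_local_nearring (p m n d : ℕ) (hp : p.Prime) (hodd : Odd p)
    (hd : 1 ≤ d) (hdn : d ≤ n) (hnm : n ≤ m) :
    ∃ inst : LeftNearring (GCar p m n d),
      @NearringProps (GCar p m n d) inst (Gmul p m n d) (Nmul p m n d)
        ((1, 0, 0) : ZMod (p ^ m) × ZMod (p ^ n) × ZMod (p ^ d))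
        (fun x => p ∣ x.1.val) := by
  have hm : m ≠ 0 := by lia
  have : NeZero (p ^ m) := ⟨pow_ne_zero _ hp.ne_zero⟩
  let inst := GCar.leftNearring hp hodd hdn hnm
  have hunit (x : GCar p m n d) : ¬IsUnit x ↔ p ∣ x.1.val := by
    rw [GCar.isUnit_iff_isUnit_fst, ZMod.isUnit_iff_not_dvd_val hp hm, not_not]
  refine ⟨inst, fun _ _ => rfl, fun _ _ => rfl, rfl, fun x => ?_, hunit, ?_⟩
  · change Nmul p m n d ((0, 0, 0) : ZMod (p ^ m) × ZMod (p ^ n) × ZMod (p ^ d)) x = (0, 0, 0)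
    refine GCar.ext ?_ ?_ ?_ <;> simp [Nmul, ZMod.cast_zero]
  · let f : GCar p m n d →+ ZMod (p ^ m) :=
      { toFun := fun x => x.1, map_zero' := rfl, map_add' := fun _ _ => rfl }
    refine ⟨((ZMod.castHom (dvd_pow_self p hm) (ZMod p)).toAddMonoidHom.comp f).ker,
      fun x => ?_⟩
    rw [hunit, AddMonoidHom.mem_ker]
    change (ZMod.cast x.1 : ZMod p) = 0 ↔ _
    rw [ZMod.cast_eq_val, ZMod.natCast_eq_zero_iff]
end
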